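/- For pointed metric spaces (X,x) and (Y,y), let D̃((X,x),(Y,y)) denote the infimum of all ε > 0 for which there exists an ε-coupling between (X,x) and (Y,y). Then for all pointed metric spaces (X,x), (Y,y), (Z,z): if D̃((X,x),(Y,y)) ≤ 1/2 and D̃((Y,y),(Z,z)) ≤ 1/2, then D̃((X,x),(Z,z)) ≤ D̃((X,x),(Y,y)) + D̃((Y,y),(Z,z)). -/

import Mathlib

open Metric Set ENNReal

/-- The set `A` in a space with distance function `d` has Nagata dimension at most `n`
with constant `c` at scale `s` (written `dim_N(A,c,s) ≤ n` in the paper): there is a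
cover `𝒰 = ⋃_{k=0}^n 𝒰 k` of `A` by subsets of `A`, each member having diameter at
most `s`, such that each family `𝒰 k` is `c*s`-separated. -/
def dimNle {X : Type*} (d : X → X → ℝ) (A : Set X) (c s : ℝ) (n : ℕ) : Prop :=
  ∃ 𝒰 : Fin (n + 1) → Set (Set X),
    (∀ k, ∀ U ∈ 𝒰 k, U ⊆ A) ∧
    (∀ p ∈ A, ∃ k, ∃ U ∈ 𝒰 k, p ∈ U) ∧
    (∀ k, ∀ U ∈ 𝒰 k, ∀ a ∈ U, ∀ b ∈ U, d a b ≤ s) ∧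
    (∀ k, ∀ U ∈ 𝒰 k, ∀ V ∈ 𝒰 k, U ≠ V → ∀ a ∈ U, ∀ b ∈ V, c * s ≤ d a b)

/-- `dimAle d A C Rbar β` (written `dim_A(A,C,Rbar) ≤ β` in the paper): for all
`0 < r < R < Rbar` and every `x ∈ A`, the ball of radius `R` around `x` in `A` can be
covered by at most `C * (R/r)^β` balls of radius `r` with centers in `A`. -/
def dimAle {X : Type*} (d : X → X → ℝ) (A : Set X) (C Rbar β : ℝ) : Prop :=
  ∀ r R : ℝ, 0 < r → r < R → R < Rbar → ∀ x ∈ A,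
    ∃ T : Finset X, ↑T ⊆ A ∧ (T.card : ℝ) ≤ C * (R / r) ^ β ∧
      ∀ z ∈ A, d z x < R → ∃ t ∈ T, d z t < r

/-- `d` is a metric distance function on `Y`: symmetric, triangle inequality, and
vanishing exactly on the diagonal. -/
def IsMetricDist {Y : Type*} (d : Y → Y → ℝ) : Prop :=
  (∀ a b, d a b = d b a) ∧ (∀ a b c, d a c ≤ d a b + d b c) ∧ (∀ a b, d a b = 0 ↔ a = b)

/-- An `ε`-coupling between the pointed spaces `(A, dA, a₀)` and `(B, dB, b₀)`:
a pseudometric on the disjoint union extending `dA` and `dB`, with `d(a₀,b₀) ≤ ε`,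
every point of `B_A(a₀,1/ε)` within distance `< ε` of a point of `B`, and every point
of `B_B(b₀,1/ε)` within distance `< ε` of a point of `A`. -/
def IsCoupling {A B : Type*} (dA : A → A → ℝ) (dB : B → B → ℝ) (a₀ : A) (b₀ : B)
    (ε : ℝ) (d : A ⊕ B → A ⊕ B → ℝ) : Prop :=
  (∀ p q, d p q = d q p) ∧
  (∀ p, d p p = 0) ∧
  (∀ p q r, d p r ≤ d p q + d q r) ∧
  (∀ u v : A, d (Sum.inl u) (Sum.inl v) = dA u v) ∧
  (∀ u v : B, d (Sum.inr u) (Sum.inr v) = dB u v) ∧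
  d (Sum.inl a₀) (Sum.inr b₀) ≤ ε ∧
  (∀ u : A, dA u a₀ < 1 / ε → ∃ v : B, d (Sum.inl u) (Sum.inr v) < ε) ∧
  (∀ v : B, dB v b₀ < 1 / ε → ∃ u : A, d (Sum.inl u) (Sum.inr v) < ε)

/-- The modified Gromov–Hausdorff measurement `D̃` of the paper: the infimum (in `ℝ≥0∞`,
so `inf ∅ = ∞`) of all `ε > 0` for which there is an `ε`-coupling between the two
pointed spaces. -/
noncomputable def ghDist {A B : Type*} (dA : A → A → ℝ) (dB : B → B → ℝ)
    (a₀ : A) (b₀ : B) : ℝ≥0∞ :=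
  sInf {e : ℝ≥0∞ | ∃ ε : ℝ, 0 < ε ∧ (∃ d, IsCoupling dA dB a₀ b₀ ε d) ∧
    e = ENNReal.ofReal ε}

/-- Gluing of two couplings along the middle space. -/
theorem coupling_glue {X Y Z : Type*} [MetricSpace X] [MetricSpace Y] [MetricSpace Z]
    (x : X) (y : Y) (z : Z) (e1 e2 e : ℝ) (he1 : 0 < e1) (he2 : 0 < e2)
    (he : e1 + e2 ≤ e) (ha : 2 * e1 + 1 / e ≤ 1 / e2) (hb : 2 * e2 + 1 / e ≤ 1 / e1)
    (d1 : X ⊕ Y → X ⊕ Y → ℝ) (d2 : Y ⊕ Z → Y ⊕ Z → ℝ)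
    (h1 : IsCoupling (fun a b : X => dist a b) (fun a b : Y => dist a b) x y e1 d1)
    (h2 : IsCoupling (fun a b : Y => dist a b) (fun a b : Z => dist a b) y z e2 d2) :
    ∃ d, IsCoupling (fun a b : X => dist a b) (fun a b : Z => dist a b) x z e d := by
  obtain ⟨s1, r1, t1, l1, m1, p1, f1, g1⟩ := h1
  obtain ⟨s2, r2, t2, l2, m2, p2, f2, g2⟩ := h2
  have n1 : ∀ p q, 0 ≤ d1 p q := fun p q => by
    have := t1 p q p
    rw [r1, s1 q p] at this; linarith
  have n2 : ∀ p q, 0 ≤ d2 p q := fun p q => by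
    have := t2 p q p
    rw [r2, s2 q p] at this; linarith
  have : Nonempty Y := ⟨y⟩
  obtain ⟨g, hg⟩ : ∃ g : X → Z → ℝ, g = fun u w =>
    ⨅ v : Y, (d1 (Sum.inl u) (Sum.inr v) + d2 (Sum.inl v) (Sum.inr w)) := ⟨_, rfl⟩
  have gle : ∀ u w v, g u w ≤ d1 (Sum.inl u) (Sum.inr v) + d2 (Sum.inl v) (Sum.inr w) := by
    intro u w v
    rw [hg]
    refine ciInf_le (f := fun v : Y => d1 (Sum.inl u) (Sum.inr v) + d2 (Sum.inl v) (Sum.inr w))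
      ⟨0, ?_⟩ v
    rintro _ ⟨v, rfl⟩
    exact add_nonneg (n1 _ _) (n2 _ _)
  have leg : ∀ u w c, (∀ v, c ≤ d1 (Sum.inl u) (Sum.inr v) + d2 (Sum.inl v) (Sum.inr w)) →
      c ≤ g u w := by
    intro u w c h
    rw [hg]
    exact le_ciInf h
  have A : ∀ u u' w, g u w ≤ dist u u' + g u' w := by
    intro u u' w
    have := leg u' w (g u w - dist u u') (fun v => by
      have a := gle u w v
      have b := t1 (Sum.inl u) (Sum.inl u') (Sum.inr v)
      rw [l1] at b
      linarith)
    linarith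
  have B : ∀ u w w', g u w ≤ g u w' + dist w' w := by
    intro u w w'
    have := leg u w' (g u w - dist w' w) (fun v => by
      have a := gle u w v
      have b := t2 (Sum.inl v) (Sum.inr w') (Sum.inr w)
      rw [m2] at b
      linarith)
    linarith
  have C : ∀ u u' w, dist u u' ≤ g u w + g u' w := by
    intro u u' w
    have := leg u w (dist u u' - g u' w) (fun v => by
      have := leg u' w (dist u u' - (d1 (Sum.inl u) (Sum.inr v) + d2 (Sum.inl v) (Sum.inr w)))
        (fun v' => by
          have a := t1 (Sum.inl u) (Sum.inr v) (Sum.inl u')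
          have b := t1 (Sum.inr v) (Sum.inr v') (Sum.inl u')
          have c := t2 (Sum.inl v) (Sum.inr w) (Sum.inl v')
          rw [l1] at a
          rw [m1, s1 (Sum.inr v') (Sum.inl u')] at b
          rw [l2, s2 (Sum.inr w) (Sum.inl v')] at c
          linarith)
      linarith)
    linarith
  have D : ∀ u w w', dist w w' ≤ g u w + g u w' := by
    intro u w w'
    have := leg u w (dist w w' - g u w') (fun v => by
      have := leg u w' (dist w w' - (d1 (Sum.inl u) (Sum.inr v) + d2 (Sum.inl v) (Sum.inr w)))
        (fun v' => by
          have a := t2 (Sum.inr w) (Sum.inl v) (Sum.inr w')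
          have b := t2 (Sum.inl v) (Sum.inl v') (Sum.inr w')
          have c := t1 (Sum.inr v) (Sum.inl u) (Sum.inr v')
          rw [m2, s2 (Sum.inr w) (Sum.inl v)] at a
          rw [l2] at b
          rw [m1, s1 (Sum.inr v) (Sum.inl u)] at c
          linarith)
      linarith)
    linarith
  have hep : 0 < e := by linarith
  have k1 : 1 / e ≤ 1 / e1 := one_div_le_one_div_of_le he1 (by linarith)
  have k2 : 1 / e ≤ 1 / e2 := one_div_le_one_div_of_le he2 (by linarith)
  refine ⟨fun p q => match p, q with
    | Sum.inl u, Sum.inl u' => dist u u'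
    | Sum.inl u, Sum.inr w => g u w
    | Sum.inr w, Sum.inl u => g u w
    | Sum.inr w, Sum.inr w' => dist w w', ?_, ?_, ?_, ?_, ?_, ?_, ?_, ?_⟩
  · rintro (u | w) (u' | w') <;> simp [dist_comm]
  · rintro (u | w) <;> simp
  · rintro (u | w) (u' | w') (u'' | w'') <;> dsimp only
    · exact dist_triangle _ _ _
    · exact A _ _ _
    · exact C _ _ _
    · exact B _ _ _
    · have := A u'' u' w
      rw [dist_comm] at this; linarith
    · exact D _ _ _
    · have := B u'' w w'
      rw [dist_comm] at this; linarith
    · exact dist_triangle _ _ _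
  · intro u v; rfl
  · intro u v; rfl
  · have := gle x z y
    dsimp only
    linarith
  · intro u hu
    dsimp only at hu ⊢
    obtain ⟨v, hv⟩ := f1 u (by dsimp only; linarith)
    obtain ⟨w, hw⟩ := f2 v (by
      have a := t1 (Sum.inr v) (Sum.inl u) (Sum.inr y)
      have b := t1 (Sum.inl u) (Sum.inl x) (Sum.inr y)
      rw [m1, s1 (Sum.inr v) (Sum.inl u)] at a
      rw [l1] at b
      dsimp only at *
      linarith)
    exact ⟨w, by have := gle u w v; linarith⟩
  · intro w hw
    dsimp only at hw ⊢
    obtain ⟨v, hv⟩ := g2 w (by dsimp only; linarith)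
    obtain ⟨u, hu⟩ := g1 v (by
      have a := t2 (Sum.inl v) (Sum.inr w) (Sum.inl y)
      have b := t2 (Sum.inr w) (Sum.inr z) (Sum.inl y)
      rw [l2] at a
      rw [m2, s2 (Sum.inr z) (Sum.inl y)] at b
      dsimp only at *
      linarith)
    exact ⟨u, by have := gle u w v; linarith⟩

theorem ghDist_extract {A B : Type*} (dA : A → A → ℝ) (dB : B → B → ℝ) (a : A) (b : B)
    (r : ℝ) (h : ghDist dA dB a b < ENNReal.ofReal r) :
    ∃ ε : ℝ, 0 < ε ∧ ε < r ∧ ∃ d, IsCoupling dA dB a b ε d := by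
  obtain ⟨_, ⟨ε, h0, hd, rfl⟩, hlt⟩ := sInf_lt_iff.1 h
  exact ⟨ε, h0, (ENNReal.ofReal_lt_ofReal_iff_of_nonneg h0.le).1 hlt, hd⟩

theorem limit_ineq (a b e : ℝ) (ha : 0 ≤ a) (hb : 0 ≤ b) (ha' : a ≤ 1 / 2) (hb' : b ≤ 1 / 2)
    (he : a + b < e) : b * (2 * a * e + 1) < e := by
  have h1 : a * b ≤ 1 / 4 := by nlinarith
  have h2 : 0 ≤ a * (1 - 2 * b * (a + b)) := by
    apply mul_nonneg ha; nlinarith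
  nlinarith [mul_pos (sub_pos.2 he) (show (0:ℝ) < 1 - 2 * (a * b) by linarith)]

theorem div_ineq (a b a' b' e : ℝ) (ha : 0 < a) (hb : 0 < b) (he : 0 < e) (haa : a ≤ a')
    (hbb : b ≤ b') (h : b' * (2 * a' * e + 1) < e) : 2 * a + 1 / e ≤ 1 / b := by
  have hb0 : 0 ≤ b' := hb.le.trans hbb
  have h2 : b * (2 * a * e + 1) ≤ b' * (2 * a' * e + 1) := by gcongr
  have h3 : 2 * a + 1 / e = (2 * a * e + 1) / e := by field_simp
  rw [h3, div_le_div_iff₀ he hb]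
  linarith

/-- If `D̃((X,x),(Y,y)) ≤ 1/2` and `D̃((Y,y),(Z,z)) ≤ 1/2`, then
`D̃((X,x),(Z,z)) ≤ D̃((X,x),(Y,y)) + D̃((Y,y),(Z,z))`. -/
theorem ghDist_triangle {X Y Z : Type*} [MetricSpace X] [MetricSpace Y] [MetricSpace Z]
    (x : X) (y : Y) (z : Z)
    (h1 : ghDist (fun a b : X => dist a b) (fun a b : Y => dist a b) x y ≤ 1/2)
    (h2 : ghDist (fun a b : Y => dist a b) (fun a b : Z => dist a b) y z ≤ 1/2) :
    ghDist (fun a b : X => dist a b) (fun a b : Z => dist a b) x z ≤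
      ghDist (fun a b : X => dist a b) (fun a b : Y => dist a b) x y +
      ghDist (fun a b : Y => dist a b) (fun a b : Z => dist a b) y z := by
  generalize hP : ghDist (fun a b : X => dist a b) (fun a b : Y => dist a b) x y = P at *
  generalize hQ : ghDist (fun a b : Y => dist a b) (fun a b : Z => dist a b) y z = Q at *
  have hPt : P ≠ ⊤ := ne_top_of_le_ne_top (by simp) h1
  have hQt : Q ≠ ⊤ := ne_top_of_le_ne_top (by simp) h2
  lift P to NNReal using hPt
  lift Q to NNReal using hQt
  have hP2 : (P : ℝ) ≤ 1 / 2 := by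
    have := ENNReal.toReal_mono (by simp) h1
    simpa using this
  have hQ2 : (Q : ℝ) ≤ 1 / 2 := by
    have := ENNReal.toReal_mono (by simp) h2
    simpa using this
  have hP0 : (0 : ℝ) ≤ P := P.coe_nonneg
  have hQ0 : (0 : ℝ) ≤ Q := Q.coe_nonneg
  refine ENNReal.le_of_forall_pos_le_add (fun δ hδ _ => ?_)
  have hδ' : (0 : ℝ) < δ := hδ
  obtain ⟨e, he⟩ : ∃ e : ℝ, e = P + Q + δ := ⟨_, rfl⟩
  have hep : 0 < e := by linarith
  have i1 := limit_ineq P Q e hP0 hQ0 hP2 hQ2 (by linarith)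
  have i2 := limit_ineq Q P e hQ0 hP0 hQ2 hP2 (by linarith)
  have c1 : ∀ᶠ η : ℝ in nhds (0 : ℝ), ((Q : ℝ) + η) * (2 * (P + η) * e + 1) < e := by
    apply ContinuousAt.eventually_lt (by fun_prop) (by fun_prop)
    simpa using i1
  have c2 : ∀ᶠ η : ℝ in nhds (0 : ℝ), ((P : ℝ) + η) * (2 * (Q + η) * e + 1) < e := by
    apply ContinuousAt.eventually_lt (by fun_prop) (by fun_prop)
    simpa using i2
  have c3 : ∀ᶠ η : ℝ in nhds (0 : ℝ), 2 * η < (δ : ℝ) := by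
    apply ContinuousAt.eventually_lt (by fun_prop) (by fun_prop)
    simpa using hδ'
  have c4 : ∀ᶠ η : ℝ in nhdsWithin (0 : ℝ) (Set.Ioi 0), 0 < η := self_mem_nhdsWithin
  obtain ⟨η, ⟨⟨j1, j2⟩, j3⟩, j4⟩ :=
    ((((c1.and c2).and c3).filter_mono nhdsWithin_le_nhds).and c4).exists
  have key : ∀ R : NNReal, (R : ENNReal) < ENNReal.ofReal (R + η) := fun R => by
    rw [← ENNReal.ofReal_coe_nnreal]
    exact (ENNReal.ofReal_lt_ofReal_iff_of_nonneg R.coe_nonneg).2 (by linarith)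
  obtain ⟨e1, p1, q1, d1, k1⟩ := ghDist_extract _ _ _ _ _ (hP.trans_lt (key P))
  obtain ⟨e2, p2, q2, d2, k2⟩ := ghDist_extract _ _ _ _ _ (hQ.trans_lt (key Q))
  have hd := coupling_glue x y z e1 e2 e p1 p2 (by linarith)
    (div_ineq e1 e2 _ _ e p1 p2 hep q1.le q2.le j1)
    (div_ineq e2 e1 _ _ e p2 p1 hep q2.le q1.le j2) d1 d2 k1 k2
  have hE : ((P : ENNReal) + Q + δ) = ENNReal.ofReal e := by
    rw [he, ← NNReal.coe_add, ← NNReal.coe_add, ENNReal.ofReal_coe_nnreal]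
    simp
  rw [hE]
  exact sInf_le ⟨e, hep, hd, rfl⟩
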